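/- Let M, k, l_n be positive integers, let β = γ > 0, let E : ℝ^M → ℝ be twice continuously differentiable with F(x) = −∇E(x) and H(x) = ∇²E(x), and let v̄_1, …, v̄_{l_n} ∈ ℝ^M be a fixed orthonormal family. Suppose φ : [0,∞) → ℝ^M and v_1, …, v_k : [0,∞) → ℝ^M are continuously differentiable and satisfy, for all t ≥ 0, the sphere-constrained nullspace-preserving high-index saddle dynamics: φ'(t) = β ( F(φ(t)) − ⟨φ(t), F(φ(t))⟩ φ(t) − 2 Σ_{j=1}^k ⟨v_j(t), F(φ(t))⟩ v_j(t) − Σ_{l=1}^{l_n} ⟨v̄_l, F(φ(t))⟩ v̄_l ) and, for each 1 ≤ i ≤ k, v_i'(t) = γ ( H(φ(t)) v_i(t) − ⟨φ(t), H(φ(t)) v_i(t)⟩ φ(t) − ⟨v_i(t), H(φ(t)) v_i(t)⟩ v_i(t) − 2 Σ_{j=1}^{i−1} ⟨v_j(t), H(φ(t)) v_i(t)⟩ v_j(t) − Σ_{l=1}^{l_n} ⟨v̄_l, H(φ(t)) v_i(t)⟩ v̄_l + ⟨v_i(t), F(φ(t))⟩ φ(t) ). If the initial values satisfy ‖φ(0)‖₂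 = 1, ⟨φ(0), v_i(0)⟩ = 0, ⟨v_i(0), v_j(0)⟩ = δ_{ij}, ⟨φ(0), v̄_l⟩ = 0 and ⟨v_i(0), v̄_l⟩ = 0 for all 1 ≤ i, j ≤ k and 1 ≤ l ≤ l_n, then for every t ≥ 0 one has ‖φ(t)‖₂ = 1, ⟨φ(t), v_i(t)⟩ = 0, ⟨v_i(t), v_j(t)⟩ = δ_{ij}, ⟨φ(t), v̄_l⟩ = 0 and ⟨v_i(t), v̄_l⟩ = 0 for all 1 ≤ i, j ≤ k and 1 ≤ l ≤ l_n. -/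

import Mathlib

open scoped RealInnerProductSpace BigOperators

/-!
Put `φ`, the `vᵢ` and the `v̄ₗ` into one frame `x`. The dynamics then has the form
`x_a' = β (g_a - ∑_b C_ab x_b)` with drive `g = (F(φ), H(φ) vᵢ, 0)`, and `C` has the same symmetric
part as the matrix `(⟪g_a, x_b⟫)`: the `⟪vᵢ, F(φ)⟫` terms of the `φ`- and `vᵢ`-equations combine to
`⟪F(φ), vᵢ⟫`, and the doubled terms with `j < i` account for both `⟪H(φ) vᵢ, vⱼ⟫` and
`⟪vᵢ, H(φ) vⱼ⟫`. Consequently the defect `D = G - 1` of the Gram matrix `G` of `x` solves the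
homogeneous linear equation `D' = -β (C D + D Cᵀ)`, so `D` stays zero if it starts at zero.
-/

open Set Matrix

section LinearBound

variable {E : Type*} [NormedAddCommGroup E] [NormedSpace ℝ E]

theorem eq_zero_of_norm_deriv_le_continuousOn_mul_norm {D D' : ℝ → E} {K : ℝ → ℝ} {t₀ : ℝ}
    (hK : ContinuousOn K (Ici t₀)) (hD : ∀ t ≥ t₀, HasDerivWithinAt D (D' t) (Ici t₀) t)
    (h₀ : D t₀ = 0) (hbound : ∀ t ≥ t₀, ‖D' t‖ ≤ K t * ‖D t‖) : ∀ t ≥ t₀, D t = 0 := by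
  intro T hT
  obtain ⟨C, hC⟩ := isCompact_Icc.bddAbove_image (hK.mono (Icc_subset_Ici_self : Icc t₀ T ⊆ _))
  refine eq_zero_of_abs_deriv_le_mul_abs_self_of_eq_zero_right (K := C)
    (fun t ht => (hD t ht.1).continuousWithinAt.mono Icc_subset_Ici_self)
    (fun t ht => (hD t ht.1).mono (Ici_subset_Ici.2 ht.1)) h₀ (fun t ht => ?_) T ⟨hT, le_rfl⟩
  exact (hbound t ht.1).trans <| mul_le_mul_of_nonneg_right
    (hC (mem_image_of_mem K (Ico_subset_Icc_self ht))) (norm_nonneg _)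

end LinearBound

section Gram

open scoped Matrix.Norms.Operator

variable {X : Type*} [NormedAddCommGroup X] [InnerProductSpace ℝ X]
variable {J : Type*}

theorem eq_zero_of_hasDerivWithinAt_mul_add_mul [Fintype J] {A B D : ℝ → Matrix J J ℝ} {t₀ : ℝ}
    (hA : ContinuousOn A (Ici t₀)) (hB : ContinuousOn B (Ici t₀))
    (hD : ∀ t ≥ t₀, HasDerivWithinAt D (A t * D t + D t * B t) (Ici t₀) t)
    (h₀ : D t₀ = 0) : ∀ t ≥ t₀, D t = 0 := by
  refine eq_zero_of_norm_deriv_le_continuousOn_mul_norm (hA.norm.add hB.norm) hD h₀ fun t _ => ?_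
  calc ‖A t * D t + D t * B t‖
      ≤ ‖A t‖ * ‖D t‖ + ‖D t‖ * ‖B t‖ :=
        (norm_add_le _ _).trans (add_le_add (norm_mul_le _ _) (norm_mul_le _ _))
    _ = (‖A t‖ + ‖B t‖) * ‖D t‖ := by ring

theorem hasDerivWithinAt_gram [Finite J] {x : J → ℝ → X} {x' : J → X} {s : Set ℝ} {t : ℝ}
    (hx : ∀ a, HasDerivWithinAt (x a) (x' a) s t) :
    HasDerivWithinAt (fun t => gram ℝ (x · t))
      (of fun a b => ⟪x a t, x' b⟫ + ⟪x' a, x b t⟫) s t :=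
  have := Fintype.ofFinite J
  hasDerivWithinAt_pi.2 fun a => hasDerivWithinAt_pi.2 fun b => (hx a).inner ℝ (hx b)

theorem gram_velocity_eq_mul_gram_sub_one_add [Fintype J] [DecidableEq J]
    {C : Matrix J J ℝ} {x g : J → X}
    (hC : ∀ a b, C a b + C b a = ⟪g a, x b⟫ + ⟪g b, x a⟫) :
    (of fun a b => ⟪x a, g b - ∑ c, C b c • x c⟫ + ⟪g a - ∑ c, C a c • x c, x b⟫) =
      -C * (gram ℝ x - 1) + (gram ℝ x - 1) * -Cᵀ := by
  have hexpand : -C * (gram ℝ x - 1) + (gram ℝ x - 1) * -Cᵀ =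
      (C + Cᵀ) - C * gram ℝ x - gram ℝ x * Cᵀ := by noncomm_ring
  rw [hexpand]
  ext a b
  have hsymm : (C + Cᵀ) a b = ⟪g a, x b⟫ + ⟪g b, x a⟫ := hC a b
  simp only [Matrix.sub_apply, hsymm, of_apply, mul_apply, gram_apply, transpose_apply,
    inner_sub_left, inner_sub_right, sum_inner, inner_sum, real_inner_smul_left,
    real_inner_smul_right, real_inner_comm (x a) (g b), mul_comm (C b _)]
  ring

theorem orthonormal_of_hasDerivWithinAt_sub_sum [Fintype J] {C : ℝ → Matrix J J ℝ}
    {x g : J → ℝ → X} {t₀ : ℝ}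
    (hCcont : ContinuousOn C (Ici t₀))
    (hC : ∀ t ≥ t₀, ∀ a b, C t a b + C t b a = ⟪g a t, x b t⟫ + ⟪g b t, x a t⟫)
    (hx : ∀ t ≥ t₀, ∀ a, HasDerivWithinAt (x a) (g a t - ∑ b, C t a b • x b t) (Ici t₀) t)
    (h₀ : Orthonormal ℝ (x · t₀)) : ∀ t ≥ t₀, Orthonormal ℝ (x · t) := by
  classical
  have hdefect : ∀ t ≥ t₀, gram ℝ (x · t) - 1 = 0 := by
    refine eq_zero_of_hasDerivWithinAt_mul_add_mul (A := fun t => -C t) (B := fun t => -(C t)ᵀ)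
      hCcont.neg (continuous_id.matrix_transpose.comp_continuousOn hCcont).neg
      (fun t ht => ?_) (sub_eq_zero.2 (gram_eq_one_iff_orthonormal.2 h₀))
    rw [← gram_velocity_eq_mul_gram_sub_one_add (hC t ht)]
    exact (hasDerivWithinAt_gram (hx t ht)).sub_const 1
  exact fun t ht => gram_eq_one_iff_orthonormal.1 (sub_eq_zero.1 (hdefect t ht))

end Gram

section Hessian

variable {X : Type*} [NormedAddCommGroup X] [InnerProductSpace ℝ X] [CompleteSpace X] {E : X → ℝ}

theorem contDiff_gradient {m n : WithTop ℕ∞} (hE : ContDiff ℝ n E) (hmn : m + 1 ≤ n) :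
    ContDiff ℝ m (gradient E) :=
  (InnerProductSpace.toDual ℝ X).symm.toContinuousLinearEquiv.contDiff.comp (hE.fderiv_right hmn)

theorem inner_fderiv_gradient (x u w : X) :
    ⟪fderiv ℝ (gradient E) x u, w⟫ = fderiv ℝ (fderiv ℝ E) x u w := by
  have hgradient : gradient E =
      (InnerProductSpace.toDual ℝ X).symm.toContinuousLinearEquiv ∘ fderiv ℝ E := rfl
  rw [hgradient, ContinuousLinearEquiv.comp_fderiv]
  exact InnerProductSpace.toDual_symm_apply

theorem isSymmetric_fderiv_gradient {x : X} (hE : IsSymmSndFDerivAt ℝ E x) :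
    (fderiv ℝ (gradient E) x : X →ₗ[ℝ] X).IsSymmetric := fun u w => by
  rw [ContinuousLinearMap.coe_coe, inner_fderiv_gradient, real_inner_comm, inner_fderiv_gradient,
    hE.eq]

end Hessian

section SaddleDynamics

variable {X : Type*} {ι κ : Type*}

/-- The family consisting of the position `p`, the ascent directions `v` and the nullspace basis
`w`, indexed by `none`, `some (.inl i)` and `some (.inr l)` respectively. -/
def saddleFrame (p : X) (v : ι → X) (w : κ → X) : Option (ι ⊕ κ) → X :=
  fun a => a.elim p (Sum.elim v w)

variable [NormedAddCommGroup X] [InnerProductSpace ℝ X]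

theorem orthonormal_saddleFrame_iff [DecidableEq ι] {p : X} {v : ι → X} {w : κ → X} :
    Orthonormal ℝ (saddleFrame p v w) ↔ Orthonormal ℝ w ∧ ‖p‖ = 1 ∧ (∀ i, ⟪p, v i⟫ = 0) ∧
      (∀ i j, ⟪v i, v j⟫ = if i = j then 1 else 0) ∧ (∀ l, ⟪p, w l⟫ = 0) ∧
      ∀ i l, ⟪v i, w l⟫ = 0 := by
  classical
  simp only [orthonormal_iff_ite, saddleFrame, Option.forall, Sum.forall, Option.elim, Sum.elim_inl,
    Sum.elim_inr, Option.some.injEq, Sum.inl.injEq, Sum.inr.injEq, reduceCtorEq, if_true, if_false,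
    real_inner_self_eq_norm_sq, pow_eq_one_iff_of_nonneg (norm_nonneg _) two_ne_zero]
  constructor
  · grind
  · grind [real_inner_comm]

variable [LinearOrder ι]

/-- The coefficients `C` for which the saddle dynamics reads `x_a' = β (g_a - ∑_b C_ab x_b)`, where
`x = saddleFrame p v w` and `g = saddleFrame f h 0`; here `f` stands for the force at `p` and `h i`
for the Hessian at `p` applied to `v i`. -/
def saddleMultiplier (p : X) (v : ι → X) (w : κ → X) (f : X) (h : ι → X) :
    Matrix (Option (ι ⊕ κ)) (Option (ι ⊕ κ)) ℝ
  | none, none => ⟪p, f⟫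
  | none, some (.inl j) => 2 * ⟪v j, f⟫
  | none, some (.inr l) => ⟪w l, f⟫
  | some (.inl i), none => ⟪p, h i⟫ - ⟪v i, f⟫
  | some (.inl i), some (.inl j) =>
    (if j = i then ⟪v j, h i⟫ else 0) + if j < i then 2 * ⟪v j, h i⟫ else 0
  | some (.inl i), some (.inr l) => ⟪w l, h i⟫
  | some (.inr _), _ => 0

theorem saddleMultiplier_add_swap {p : X} {v : ι → X} {w : κ → X} {f : X} {h : ι → X}
    (hsymm : ∀ i j, ⟪h i, v j⟫ = ⟪h j, v i⟫) (a b : Option (ι ⊕ κ)) :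
    saddleMultiplier p v w f h a b + saddleMultiplier p v w f h b a =
      ⟪saddleFrame f h 0 a, saddleFrame p v w b⟫ + ⟪saddleFrame f h 0 b, saddleFrame p v w a⟫ := by
  rcases a with _ | i | l <;> rcases b with _ | j | m <;>
    simp only [saddleMultiplier, saddleFrame, Option.elim, Sum.elim_inl, Sum.elim_inr,
      Pi.zero_apply, inner_zero_left, real_inner_comm _ f, real_inner_comm _ (h _)]
  case some.inl.some.inl =>
    have hswap : ⟪v i, h j⟫ = ⟪v j, h i⟫ := by rw [real_inner_comm, ← hsymm, real_inner_comm]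
    rcases lt_trichotomy i j with hij | rfl | hij
    · simp only [hij, hij.ne, hij.ne', hij.not_gt, if_true, if_false, hswap]
      ring
    · simp only [lt_irrefl, if_true, if_false]
      ring
    · simp only [hij, hij.ne, hij.ne', hij.not_gt, if_true, if_false, hswap]
      ring
  all_goals ring

theorem continuousOn_saddleMultiplier {p : ℝ → X} {v : ι → ℝ → X} {w : κ → X} {f : ℝ → X}
    {h : ι → ℝ → X} {s : Set ℝ} (hp : ContinuousOn p s) (hv : ∀ i, ContinuousOn (v i) s)
    (hf : ContinuousOn f s) (hh : ∀ i, ContinuousOn (h i) s) :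
    ContinuousOn (fun t => saddleMultiplier (p t) (v · t) w (f t) (h · t)) s := by
  refine continuousOn_pi.2 fun a => continuousOn_pi.2 fun b => ?_
  rcases a with _ | i | l <;> rcases b with _ | j | m <;> simp only [saddleMultiplier]
  case some.inl.some.inl => split_ifs <;> fun_prop
  all_goals fun_prop

variable [Fintype ι] [Fintype κ]

theorem saddleFrame_none_sub_sum_saddleMultiplier (p : X) (v : ι → X) (w : κ → X) (f : X)
    (h : ι → X) :
    saddleFrame f h (0 : κ → X) none -
        ∑ b, saddleMultiplier p v w f h none b • saddleFrame p v w b =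
      f - ⟪p, f⟫ • p - (2 : ℝ) • ∑ j, ⟪v j, f⟫ • v j - ∑ l, ⟪w l, f⟫ • w l := by
  simp only [saddleFrame, saddleMultiplier, Option.elim, Sum.elim_inl, Sum.elim_inr,
    Fintype.sum_option, Fintype.sum_sum_type, Finset.smul_sum, mul_smul]
  abel

theorem saddleFrame_inl_sub_sum_saddleMultiplier (p : X) (v : ι → X) (w : κ → X) (f : X)
    (h : ι → X) (i : ι) :
    saddleFrame f h (0 : κ → X) (some (.inl i)) -
        ∑ b, saddleMultiplier p v w f h (some (.inl i)) b • saddleFrame p v w b =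
      h i - ⟪p, h i⟫ • p - ⟪v i, h i⟫ • v i
        - (2 : ℝ) • ∑ j ∈ Finset.univ.filter (fun j => j < i), ⟪v j, h i⟫ • v j
        - ∑ l, ⟪w l, h i⟫ • w l + ⟪v i, f⟫ • p := by
  simp only [saddleFrame, saddleMultiplier, Option.elim, Sum.elim_inl, Sum.elim_inr,
    Fintype.sum_option, Fintype.sum_sum_type, Finset.smul_sum, Finset.sum_filter,
    Finset.sum_add_distrib, Finset.sum_ite_eq', Finset.mem_univ, if_true, mul_smul, sub_smul,
    add_smul, ite_smul, zero_smul, smul_ite, smul_zero]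
  abel

theorem nphisd_sphere_constrained_structure_preservation_general (β : ℝ)
    {F : X → X} (hF : Continuous F)
    {H : X → X →L[ℝ] X} (hH : Continuous H) (hHsymm : ∀ x, (H x : X →ₗ[ℝ] X).IsSymmetric)
    {w : κ → X} {φ : ℝ → X} {v : ι → ℝ → X}
    (hφ : ∀ t ≥ (0 : ℝ), HasDerivWithinAt φ
      (β • (F (φ t) - ⟪φ t, F (φ t)⟫ • φ t - (2 : ℝ) • ∑ j, ⟪v j t, F (φ t)⟫ • v j t
        - ∑ l, ⟪w l, F (φ t)⟫ • w l)) (Ici 0) t)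
    (hv : ∀ t ≥ (0 : ℝ), ∀ i, HasDerivWithinAt (v i)
      (β • (H (φ t) (v i t) - ⟪φ t, H (φ t) (v i t)⟫ • φ t
        - ⟪v i t, H (φ t) (v i t)⟫ • v i t
        - (2 : ℝ) • ∑ j ∈ Finset.univ.filter (fun j => j < i),
            ⟪v j t, H (φ t) (v i t)⟫ • v j t
        - ∑ l, ⟪w l, H (φ t) (v i t)⟫ • w l
        + ⟪v i t, F (φ t)⟫ • φ t)) (Ici 0) t)
    (h₀ : Orthonormal ℝ (saddleFrame (φ 0) (v · 0) w)) :
    ∀ t ≥ (0 : ℝ), Orthonormal ℝ (saddleFrame (φ t) (v · t) w) := by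
  have hφc : ContinuousOn φ (Ici 0) := fun t ht => (hφ t ht).continuousWithinAt
  have hvc : ∀ i, ContinuousOn (v i) (Ici 0) := fun i t ht => (hv t ht i).continuousWithinAt
  let f : ℝ → X := fun t => F (φ t)
  let h : ι → ℝ → X := fun i t => H (φ t) (v i t)
  let C := fun t => saddleMultiplier (φ t) (v · t) w (f t) (h · t)
  have hC : ContinuousOn C (Ici 0) :=
    continuousOn_saddleMultiplier hφc hvc (hF.comp_continuousOn hφc)
      fun i => (hH.comp_continuousOn hφc).clm_apply (hvc i)
  refine orthonormal_of_hasDerivWithinAt_sub_sum (C := fun t => β • C t)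
    (x := fun a t => saddleFrame (φ t) (v · t) w a)
    (g := fun a t => β • saddleFrame (f t) (h · t) 0 a) (hC.const_smul β) (fun t _ a b => ?_)
    (fun t ht a => ?_) h₀
  · have hsymm : ∀ i j, ⟪h i t, v j t⟫ = ⟪h j t, v i t⟫ := fun i j =>
      (hHsymm (φ t) (v i t) (v j t)).trans (real_inner_comm _ _)
    simp only [Matrix.smul_apply, smul_eq_mul, real_inner_smul_left, ← mul_add, C,
      saddleMultiplier_add_swap hsymm]
  · simp only [Matrix.smul_apply, smul_assoc, ← Finset.smul_sum, ← smul_sub]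
    rcases a with _ | i | l
    · exact (hφ t ht).congr_deriv <| congrArg (β • ·)
        (saddleFrame_none_sub_sum_saddleMultiplier ..).symm
    · exact (hv t ht i).congr_deriv <| congrArg (β • ·)
        (saddleFrame_inl_sub_sum_saddleMultiplier (φ t) (v · t) w (f t) (h · t) i).symm
    · simpa [saddleFrame, saddleMultiplier, C] using hasDerivWithinAt_const t (Ici 0) (w l)

end SaddleDynamics

/-- Structure preservation of the sphere-constrained nullspace-preserving
high-index saddle dynamics: the unit-sphere constraint, orthogonality of `φ`
to the ascent directions and to the fixed nullspace basis, orthonormality of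
the ascent directions, and their orthogonality to the nullspace basis are all
preserved in time. -/
theorem nphisd_sphere_constrained_structure_preservation
    (M k ln : ℕ) (hM : 0 < M) (hk : 0 < k) (hln : 0 < ln)
    (β γ : ℝ) (hβ : 0 < β) (hβγ : β = γ)
    (En : EuclideanSpace ℝ (Fin M) → ℝ) (hEn : ContDiff ℝ 2 En)
    (F : EuclideanSpace ℝ (Fin M) → EuclideanSpace ℝ (Fin M))
    (hF : ∀ x, F x = -gradient En x)
    (H : EuclideanSpace ℝ (Fin M) → EuclideanSpace ℝ (Fin M) →L[ℝ] EuclideanSpace ℝ (Fin M))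
    (hH : ∀ x, H x = fderiv ℝ (gradient En) x)
    (vbar : Fin ln → EuclideanSpace ℝ (Fin M)) (hvbar : Orthonormal ℝ vbar)
    (φ : ℝ → EuclideanSpace ℝ (Fin M)) (v : Fin k → ℝ → EuclideanSpace ℝ (Fin M))
    (hφ : ∀ t ≥ (0:ℝ), HasDerivWithinAt φ
      (β • (F (φ t) - ⟪φ t, F (φ t)⟫ • φ t - (2:ℝ) • ∑ j, ⟪v j t, F (φ t)⟫ • v j t
        - ∑ l, ⟪vbar l, F (φ t)⟫ • vbar l)) (Set.Ici 0) t)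
    (hv : ∀ t ≥ (0:ℝ), ∀ i : Fin k, HasDerivWithinAt (v i)
      (γ • ((H (φ t)) (v i t) - ⟪φ t, (H (φ t)) (v i t)⟫ • φ t
        - ⟪v i t, (H (φ t)) (v i t)⟫ • v i t
        - (2:ℝ) • ∑ j ∈ Finset.univ.filter (fun j => j < i),
            ⟪v j t, (H (φ t)) (v i t)⟫ • v j t
        - ∑ l, ⟪vbar l, (H (φ t)) (v i t)⟫ • vbar l
        + ⟪v i t, F (φ t)⟫ • φ t)) (Set.Ici 0) t)
    (hinit0 : ‖φ 0‖ = 1)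
    (hinit1 : ∀ i : Fin k, ⟪φ 0, v i 0⟫ = 0)
    (hinit2 : ∀ i j : Fin k, ⟪v i 0, v j 0⟫ = if i = j then 1 else 0)
    (hinit3 : ∀ l : Fin ln, ⟪φ 0, vbar l⟫ = 0)
    (hinit4 : ∀ (i : Fin k) (l : Fin ln), ⟪v i 0, vbar l⟫ = 0) :
    ∀ t ≥ (0:ℝ),
      ‖φ t‖ = 1
      ∧ (∀ i : Fin k, ⟪φ t, v i t⟫ = 0)
      ∧ (∀ i j : Fin k, ⟪v i t, v j t⟫ = if i = j then 1 else 0)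
      ∧ (∀ l : Fin ln, ⟪φ t, vbar l⟫ = 0)
      ∧ (∀ (i : Fin k) (l : Fin ln), ⟪v i t, vbar l⟫ = 0) := by
  obtain rfl : F = fun x => -gradient En x := funext hF
  obtain rfl : H = fderiv ℝ (gradient En) := funext hH
  subst hβγ
  have hgradient : ContDiff ℝ 1 (gradient En) := contDiff_gradient hEn (by norm_num)
  intro t ht
  exact (orthonormal_saddleFrame_iff.1
    (nphisd_sphere_constrained_structure_preservation_general β hgradient.continuous.neg
      (hgradient.continuous_fderiv one_ne_zero)
      (fun x => isSymmetric_fderiv_gradient (hEn.contDiffAt.isSymmSndFDerivAt (by simp))) hφ hv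
      (orthonormal_saddleFrame_iff.2 ⟨hvbar, hinit0, hinit1, hinit2, hinit3, hinit4⟩) t ht)).2
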